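/- arXiv:2306.14075 — 2 statements merged into one kernel-verified Lean document; each statement's English description precedes it below -/
import Mathlib

section
/- Let R, S, T be finite binary relations and let Q = {(x, y, z) : (x, y) ∈ R, (y, z) ∈ S, and (z, x) ∈ T} be the triangle join. Then |Q|^3 ≤ ||deg_R(Y|X)||_2^2 · ||deg_S(Z|Y)||_2^2 · ||deg_T(X|Z)||_2^2, i.e. |Q| ≤ (||deg_R(Y|X)||_2^2 · ||deg_S(Z|Y)||_2^2 · ||deg_T(X|Z)||_2^2)^{1/3}. -/
open scoped BigOperators

namespace JoinBounds

noncomputable section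

variable {α β γ : Type*}

/-- Degree of the value `x` in the first coordinate of a binary relation `R`:
the number of distinct `y` with `(x, y) ∈ R`. -/
def degFst [DecidableEq α] [DecidableEq β] (R : Finset (α × β)) (x : α) : ℕ :=
  (R.filter fun t => t.1 = x).card

/-- The square of the `ℓ_2`-norm of the degree sequence of a binary relation,
conditioned on the first coordinate. -/
def l2sqFst [DecidableEq α] [DecidableEq β] (R : Finset (α × β)) : ℝ :=
  ∑ x ∈ R.image Prod.fst, (degFst R x : ℝ) ^ 2

/-- The triangle join `Q = {(x, y, z) : (x, y) ∈ R ∧ (y, z) ∈ S ∧ (z, x) ∈ T}`. -/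
def triangleJoin [DecidableEq α] [DecidableEq β] [DecidableEq γ]
    (R : Finset (α × β)) (S : Finset (β × γ)) (T : Finset (γ × α)) : Finset (α × β × γ) :=
  (((R ×ˢ S).filter fun t => t.1.2 = t.2.1).image fun t => (t.1.1, t.1.2, t.2.2)).filter
    fun t => (t.2.2, t.1) ∈ T

end

theorem amgm_aux (u v w c : ℝ) (hu : 0 < u) (hv : 0 < v) (hw : 0 < w) (hc : c ^ 3 ≤ u * v * w) :
    3 * c ≤ u + v + w := by
  have h : (3 * c) ^ 3 ≤ (u + v + w) ^ 3 := by
    nlinarith [mul_nonneg hu.le (sq_nonneg (v - w)), mul_nonneg hv.le (sq_nonneg (u - w)),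
      mul_nonneg hw.le (sq_nonneg (u - v)), mul_nonneg hu.le (sq_nonneg (u - w)),
      mul_nonneg hu.le (sq_nonneg (u - v)), mul_nonneg hv.le (sq_nonneg (u - v)),
      mul_nonneg hv.le (sq_nonneg (v - w)), mul_nonneg hw.le (sq_nonneg (u - w)),
      mul_nonneg hw.le (sq_nonneg (v - w))]
  exact le_of_pow_le_pow_left₀ (by norm_num) (by positivity) h

theorem holder_aux {ι : Type*} (s : Finset ι) (f g h : ι → ℝ) (hf : ∀ i ∈ s, 0 < f i)
    (hg : ∀ i ∈ s, 0 < g i) (hh : ∀ i ∈ s, 0 < h i) (h1 : ∀ i ∈ s, 1 ≤ f i * g i * h i) :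
    (s.card : ℝ) ^ 3 ≤ (∑ i ∈ s, f i) * (∑ i ∈ s, g i) * (∑ i ∈ s, h i) := by
  rcases s.eq_empty_or_nonempty with rfl | hs
  · simp
  have hF := Finset.sum_pos hf hs
  have hG := Finset.sum_pos hg hs
  have hH := Finset.sum_pos hh hs
  set F := ∑ i ∈ s, f i with hFd
  set G := ∑ i ∈ s, g i with hGd
  set H := ∑ i ∈ s, h i with hHd
  obtain ⟨K, hK, hK3⟩ : ∃ K : ℝ, 0 < K ∧ K ^ 3 = F * G * H := by
    refine ⟨(F * G * H) ^ ((1 : ℝ) / 3), by positivity, ?_⟩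
    rw [← Real.rpow_natCast, ← Real.rpow_mul (by positivity)]
    norm_num
  have key : ∀ i ∈ s, 3 * (1 / K) ≤ f i / F + g i / G + h i / H := by
    intro i hi
    have := hf i hi
    have := hg i hi
    have := hh i hi
    apply amgm_aux _ _ _ _ (by positivity) (by positivity) (by positivity)
    have e : f i / F * (g i / G) * (h i / H) = f i * g i * h i / (F * G * H) := by
      field_simp
    rw [e, div_pow, one_pow, hK3]
    have := h1 i hi
    gcongr
  have hsum := Finset.sum_le_sum key
  rw [Finset.sum_add_distrib, Finset.sum_add_distrib, ← Finset.sum_div, ← Finset.sum_div,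
    ← Finset.sum_div, ← hFd, ← hGd, ← hHd, div_self hF.ne', div_self hG.ne', div_self hH.ne',
    Finset.sum_const, nsmul_eq_mul] at hsum
  have : (s.card : ℝ) / K ≤ 1 := by
    have e : (s.card : ℝ) * (3 * (1 / K)) = 3 * (s.card / K) := by ring
    linarith
  rw [div_le_one hK] at this
  rw [← hK3]
  gcongr

theorem sum_aux {ι A B : Type*} [DecidableEq A] [DecidableEq B] (Q : Finset ι)
    (R : Finset (A × B)) (p : ι → A × B) (hp : ∀ q ∈ Q, p q ∈ R) :
    ∑ q ∈ Q, (degFst R (p q).1 : ℝ) / ((Q.filter fun r => p r = p q).card : ℝ)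
      ≤ l2sqFst R := by
  rw [← Finset.sum_fiberwise_of_maps_to hp]
  have h1 : ∀ t ∈ R, ∑ q ∈ Q.filter (fun q => p q = t),
      (degFst R (p q).1 : ℝ) / ((Q.filter fun r => p r = p q).card : ℝ)
      ≤ (degFst R t.1 : ℝ) := by
    intro t _
    have : ∀ q ∈ Q.filter (fun q => p q = t),
      (degFst R (p q).1 : ℝ) / ((Q.filter fun r => p r = p q).card : ℝ)
      = (degFst R t.1 : ℝ) / ((Q.filter fun r => p r = t).card : ℝ) := by
      intro q hq
      rw [(Finset.mem_filter.1 hq).2]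
    rw [Finset.sum_congr rfl this, Finset.sum_const, nsmul_eq_mul]
    rcases eq_or_ne ((Q.filter fun r => p r = t).card : ℝ) 0 with h0 | h0
    · rw [h0, zero_mul]
      exact Nat.cast_nonneg _
    · rw [mul_div_cancel₀ _ h0]
  refine (Finset.sum_le_sum h1).trans ?_
  rw [← Finset.sum_fiberwise_of_maps_to (fun t ht => Finset.mem_image_of_mem Prod.fst ht)]
  unfold l2sqFst
  refine Finset.sum_le_sum fun x _ => ?_
  have : ∀ t ∈ R.filter (fun t => t.1 = x), (degFst R t.1 : ℝ) = degFst R x := by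
    intro t ht
    rw [(Finset.mem_filter.1 ht).2]
  rw [Finset.sum_congr rfl this, Finset.sum_const, nsmul_eq_mul, sq]
  exact le_rfl

theorem mem_join_aux {α β γ : Type*} [DecidableEq α] [DecidableEq β] [DecidableEq γ]
    {R : Finset (α × β)} {S : Finset (β × γ)} {T : Finset (γ × α)} {q : α × β × γ}
    (h : q ∈ triangleJoin R S T) :
    (q.1, q.2.1) ∈ R ∧ (q.2.1, q.2.2) ∈ S ∧ (q.2.2, q.1) ∈ T := by
  unfold triangleJoin at h
  simp only [Finset.mem_filter, Finset.mem_image, Finset.mem_product] at h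
  obtain ⟨⟨⟨⟨a, b⟩, ⟨c, d⟩⟩, ⟨⟨h1, h2⟩, h3⟩, rfl⟩, h4⟩ := h
  simp only at h1 h2 h3 h4
  subst h3
  exact ⟨h1, h2, h4⟩

theorem deg_aux {ι A B : Type*} [DecidableEq A] [DecidableEq B] (F : Finset ι)
    (S : Finset (A × B)) (y : A) (p : ι → A × B) (hp : ∀ q ∈ F, p q ∈ S ∧ (p q).1 = y)
    (hi : Set.InjOn p F) : F.card ≤ degFst S y :=
  Finset.card_le_card_of_injOn p (fun q hq => by simpa using hp q hq) hi

theorem main_aux {α β γ : Type*} [DecidableEq α] [DecidableEq β] [DecidableEq γ]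
    (R : Finset (α × β)) (S : Finset (β × γ)) (T : Finset (γ × α)) :
    ((triangleJoin R S T).card : ℝ) ^ 3 ≤ l2sqFst R * l2sqFst S * l2sqFst T := by
  set Q := triangleJoin R S T with hQ
  let p1 : α × β × γ → α × β := fun q => (q.1, q.2.1)
  let p2 : α × β × γ → β × γ := fun q => (q.2.1, q.2.2)
  let p3 : α × β × γ → γ × α := fun q => (q.2.2, q.1)
  have m1 : ∀ q ∈ Q, p1 q ∈ R := fun q hq => (mem_join_aux hq).1
  have m2 : ∀ q ∈ Q, p2 q ∈ S := fun q hq => (mem_join_aux hq).2.1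
  have m3 : ∀ q ∈ Q, p3 q ∈ T := fun q hq => (mem_join_aux hq).2.2
  have s1 := sum_aux Q R p1 m1
  have s2 := sum_aux Q S p2 m2
  have s3 := sum_aux Q T p3 m3
  have n1 : ∀ q ∈ Q, 0 < (Q.filter fun r => p1 r = p1 q).card := fun q hq =>
    Finset.card_pos.2 ⟨q, by simp [hq]⟩
  have n2 : ∀ q ∈ Q, 0 < (Q.filter fun r => p2 r = p2 q).card := fun q hq =>
    Finset.card_pos.2 ⟨q, by simp [hq]⟩
  have n3 : ∀ q ∈ Q, 0 < (Q.filter fun r => p3 r = p3 q).card := fun q hq =>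
    Finset.card_pos.2 ⟨q, by simp [hq]⟩
  have d1 : ∀ q ∈ Q, (Q.filter fun r => p1 r = p1 q).card ≤ degFst S (p2 q).1 := by
    intro q hq
    refine deg_aux _ _ _ p2 ?_ ?_
    · intro r hr
      rw [Finset.mem_filter] at hr
      exact ⟨m2 _ hr.1, congrArg Prod.snd hr.2⟩
    · rintro ⟨a, b, c⟩ h ⟨a2, b2, c2⟩ k e
      simp [p1, p2] at h k e ⊢
      grind
  have d2 : ∀ q ∈ Q, (Q.filter fun r => p2 r = p2 q).card ≤ degFst T (p3 q).1 := by
    intro q hq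
    refine deg_aux _ _ _ p3 ?_ ?_
    · intro r hr
      rw [Finset.mem_filter] at hr
      exact ⟨m3 _ hr.1, congrArg Prod.snd hr.2⟩
    · rintro ⟨a, b, c⟩ h ⟨a2, b2, c2⟩ k e
      simp [p2, p3] at h k e ⊢
      grind
  have d3 : ∀ q ∈ Q, (Q.filter fun r => p3 r = p3 q).card ≤ degFst R (p1 q).1 := by
    intro q hq
    refine deg_aux _ _ _ p1 ?_ ?_
    · intro r hr
      rw [Finset.mem_filter] at hr
      exact ⟨m1 _ hr.1, congrArg Prod.snd hr.2⟩
    · rintro ⟨a, b, c⟩ h ⟨a2, b2, c2⟩ k e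
      simp [p1, p3] at h k e ⊢
      grind
  have hold := holder_aux Q
    (fun q => (degFst R (p1 q).1 : ℝ) / ((Q.filter fun r => p1 r = p1 q).card : ℝ))
    (fun q => (degFst S (p2 q).1 : ℝ) / ((Q.filter fun r => p2 r = p2 q).card : ℝ))
    (fun q => (degFst T (p3 q).1 : ℝ) / ((Q.filter fun r => p3 r = p3 q).card : ℝ))
    ?_ ?_ ?_ ?_
  · refine hold.trans ?_
    have z1 := Finset.sum_nonneg (s := Q) fun q _ => div_nonneg
      (Nat.cast_nonneg (α := ℝ) (degFst R (p1 q).1))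
      (Nat.cast_nonneg (α := ℝ) (Q.filter fun r => p1 r = p1 q).card)
    have z2 := Finset.sum_nonneg (s := Q) fun q _ => div_nonneg
      (Nat.cast_nonneg (α := ℝ) (degFst S (p2 q).1))
      (Nat.cast_nonneg (α := ℝ) (Q.filter fun r => p2 r = p2 q).card)
    have z3 := Finset.sum_nonneg (s := Q) fun q _ => div_nonneg
      (Nat.cast_nonneg (α := ℝ) (degFst T (p3 q).1))
      (Nat.cast_nonneg (α := ℝ) (Q.filter fun r => p3 r = p3 q).card)
    exact mul_le_mul (mul_le_mul s1 s2 z2 (z1.trans s1)) s3 z3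
      (mul_nonneg (z1.trans s1) (z2.trans s2))
  · intro q hq
    exact div_pos (Nat.cast_pos.2 ((n3 q hq).trans_le (d3 q hq))) (Nat.cast_pos.2 (n1 q hq))
  · intro q hq
    exact div_pos (Nat.cast_pos.2 ((n1 q hq).trans_le (d1 q hq))) (Nat.cast_pos.2 (n2 q hq))
  · intro q hq
    exact div_pos (Nat.cast_pos.2 ((n2 q hq).trans_le (d2 q hq))) (Nat.cast_pos.2 (n3 q hq))
  · intro q hq
    have a1 := Nat.cast_pos (α := ℝ).2 (n1 q hq)
    have a2 := Nat.cast_pos (α := ℝ).2 (n2 q hq)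
    have a3 := Nat.cast_pos (α := ℝ).2 (n3 q hq)
    show (1 : ℝ) ≤ _ / _ * (_ / _) * (_ / _)
    rw [div_mul_div_comm, div_mul_div_comm, one_le_div (mul_pos (mul_pos a1 a2) a3)]
    have := Nat.mul_le_mul (Nat.mul_le_mul (d3 q hq) (d1 q hq)) (d2 q hq)
    have h := (Nat.cast_le (α := ℝ)).2 this
    push_cast at h
    linarith

/-- **triangle join, `ℓ_2` bound.**
`|Q|³ ≤ ‖deg_R(Y|X)‖_2² · ‖deg_S(Z|Y)‖_2² · ‖deg_T(X|Z)‖_2²`, i.e.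
`|Q| ≤ (‖deg_R(Y|X)‖_2² · ‖deg_S(Z|Y)‖_2² · ‖deg_T(X|Z)‖_2²)^{1/3}`. -/
theorem triangle_join_l2_bound {α β γ : Type*} [DecidableEq α] [DecidableEq β] [DecidableEq γ]
    (R : Finset (α × β)) (S : Finset (β × γ)) (T : Finset (γ × α)) :
    ((triangleJoin R S T).card : ℝ) ^ 3 ≤ l2sqFst R * l2sqFst S * l2sqFst T ∧
    ((triangleJoin R S T).card : ℝ)
      ≤ (l2sqFst R * l2sqFst S * l2sqFst T) ^ ((1 : ℝ) / 3) := by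
  have h := main_aux R S T
  refine ⟨h, ?_⟩
  have h2 := Real.rpow_le_rpow (by positivity) h (by norm_num : (0 : ℝ) ≤ 1 / 3)
  rwa [← Real.rpow_natCast, ← Real.rpow_mul (by positivity),
    show ((3 : ℕ) : ℝ) * (1 / 3) = 1 by norm_num, Real.rpow_one] at h2

end JoinBounds
end

section
/- There exist a full conjunctive query Q(X) = ⋀_{j∈[m]} R_j(Y_j) over a set X of n = 4 variables, a set of abstract statistics Σ = {τ_1, …, τ_s} over X with each τ_i = ((V_i|U_i), p_i) guarded by some atom R_{j_i} of Q (i.e. U_i ∪ V_i ⊆ Y_{j_i}), and log-statistics b ∈ ℝ^s with b_i > 0, such that for every integer k ≥ 1 and every database instance D = (R_1^D, …, R_m^D) satisfying the k-amplified statistics (i.e. ||deg_{R_{j_i}^D}(V_i|U_i)||_{p_i} ≤ 2^{k·b_i} for all i ∈ [s]), one has log₂ |Q(D)| ≤ (35/36) · Log-L-Bound_{Γ_n}(Σ, k·b). -/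
open scoped BigOperators ENNReal

namespace JoinBounds

noncomputable section

variable {A α : Type*}

/-- The projection of a tuple `t : A → α` onto the attribute set `U`, represented as a
partial tuple. -/
def proj [DecidableEq A] (U : Finset A) (t : A → α) : A → Option α :=
  fun x => if x ∈ U then some (t x) else none

/-- The projection of a relation `R` onto the attribute set `U`. -/
def projR [Fintype A] [DecidableEq A] [DecidableEq α] (U : Finset A) (R : Finset (A → α)) :
    Finset (A → Option α) :=
  R.image (proj U)

/-- The degree of a `U`-tuple `u` in `R`: the number of distinct `V`-tuples
appearing in `R` together with `u`. -/
def deg [Fintype A] [DecidableEq A] [DecidableEq α] (U V : Finset A) (R : Finset (A → α))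
    (u : A → Option α) : ℕ :=
  (projR V (R.filter fun t => proj U t = u)).card

/-- The `ℓ_p`-norm of the degree sequence `deg_R(V|U)`, for `p ∈ (0, ∞]`. -/
def lpNorm [Fintype A] [DecidableEq A] [DecidableEq α] (U V : Finset A) (R : Finset (A → α))
    (p : ℝ≥0∞) : ℝ :=
  if p = ⊤ then (((projR U R).sup fun u => deg U V R u : ℕ) : ℝ)
  else (∑ u ∈ projR U R, (deg U V R u : ℝ) ^ p.toReal) ^ (1 / p.toReal)

/-- The marginal probability, on the attribute set `W`, of the partial tuple `w`, under a
probability distribution `P` on the tuples of `R`. -/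
def marg [Fintype A] [DecidableEq A] [DecidableEq α] (P : (A → α) → ℝ) (R : Finset (A → α))
    (W : Finset A) (w : A → Option α) : ℝ :=
  ∑ t ∈ R.filter fun t => proj W t = w, P t

/-- The (base-2 Shannon) entropy of the marginal on the attribute set `W` of the
distribution `P` on the tuples of `R`: this is the entropic vector `h(W)`. -/
def entropy [Fintype A] [DecidableEq A] [DecidableEq α] (P : (A → α) → ℝ) (R : Finset (A → α))
    (W : Finset A) : ℝ :=
  -∑ w ∈ projR W R, marg P R W w * Real.logb 2 (marg P R W w)

noncomputable section

variable {A : Type*}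

/-- `h(τ)` for the abstract statistics `τ = ((V|U), p)`:
`(1/p)·h(U) + h(V|U)` where `h(V|U) = h(U ∪ V) - h(U)` and `1/∞ = 0`. -/
def statVal [DecidableEq A] (h : Finset A → ℝ) (U V : Finset A) (p : ℝ≥0∞) : ℝ :=
  (1 / p).toReal * h U + (h (U ∪ V) - h U)

/-- A polymatroid on the variable set `A`. -/
def IsPolymatroid [DecidableEq A] (h : Finset A → ℝ) : Prop :=
  h ∅ = 0 ∧ (∀ U V : Finset A, U ⊆ V → h U ≤ h V) ∧
    ∀ U V : Finset A, h U + h V ≥ h (U ∪ V) + h (U ∩ V)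

/-- The set `Γ_n` of polymatroids. -/
def Gamma (A : Type*) [DecidableEq A] : Set (Finset A → ℝ) := {h | IsPolymatroid h}

/-- The step function `h^W`. -/
def stepFn [DecidableEq A] (W : Finset A) : Finset A → ℝ :=
  fun U => if (U ∩ W).Nonempty then 1 else 0

/-- The set `N_n` of normal polymatroids: nonnegative linear combinations of step functions. -/
def Normal (A : Type*) [Fintype A] [DecidableEq A] : Set (Finset A → ℝ) :=
  {h | ∃ α : Finset A → ℝ, (∀ W, 0 ≤ α W) ∧ h = ∑ W : Finset A, α W • stepFn W}

/-- `Log-U-Bound_K(Σ, b)`: the infimum of `∑ i, w i * b i` over all nonnegative `w` such that the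
`Σ`-inequality `∑ i, w i * h(τ i) ≥ h(X)` is valid for all `h ∈ K` (an `EReal`; `⊤` if no valid
inequality exists). -/
def LogUBound [Fintype A] [DecidableEq A] (K : Set (Finset A → ℝ)) (s : ℕ)
    (U V : Fin s → Finset A) (p : Fin s → ℝ≥0∞) (b : Fin s → ℝ) : EReal :=
  sInf {r : EReal | ∃ w : Fin s → ℝ, (∀ i, 0 ≤ w i) ∧
    (∀ h ∈ K, ∑ i, w i * statVal h (U i) (V i) (p i) ≥ h Finset.univ) ∧
    r = ((∑ i, w i * b i : ℝ) : EReal)}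

/-- `Log-L-Bound_K(Σ, b)`: the supremum of `h(X)` over all `h ∈ K` satisfying the
log-statistics `h(τ i) ≤ b i` (an `EReal`). -/
def LogLBound [Fintype A] [DecidableEq A] (K : Set (Finset A → ℝ)) (s : ℕ)
    (U V : Fin s → Finset A) (p : Fin s → ℝ≥0∞) (b : Fin s → ℝ) : EReal :=
  sSup {r : EReal | ∃ h ∈ K, (∀ i, statVal h (U i) (V i) (p i) ≤ b i) ∧
    r = ((h Finset.univ : ℝ) : EReal)}

end

/-! ### Entropy of functions on a finite weighted set -/

section Ent

variable {Ω β δ ε : Type*}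

/-- The mass of the fibre of `f` over `y`. -/
def pm [DecidableEq β] (S : Finset Ω) (w : Ω → ℝ) (f : Ω → β) (y : β) : ℝ :=
  ∑ s ∈ S with f s = y, w s

/-- The (natural-log) entropy of `f` under the weights `w` on `S`. -/
def Hf [DecidableEq β] (S : Finset Ω) (w : Ω → ℝ) (f : Ω → β) : ℝ :=
  -∑ t ∈ S, w t * Real.log (pm S w f (f t))

theorem pm_pos [DecidableEq β] {S : Finset Ω} {w : Ω → ℝ} (hw : ∀ s ∈ S, 0 < w s) (f : Ω → β)
    {t : Ω} (ht : t ∈ S) : 0 < pm S w f (f t) := by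
  unfold pm
  apply Finset.sum_pos
  · intro i hi
    exact hw i (Finset.mem_filter.1 hi).1
  · exact ⟨t, by simp [ht]⟩

theorem gibbs {S : Finset Ω} {w x : Ω → ℝ} (hw : ∀ s ∈ S, 0 < w s) (h1 : ∑ s ∈ S, w s = 1)
    (hx : ∀ s ∈ S, 0 < x s) :
    ∑ s ∈ S, w s * Real.log (x s) ≤ Real.log (∑ s ∈ S, w s * x s) := by
  have := strictConcaveOn_log_Ioi.concaveOn.le_map_sum (t := S) (w := w) (p := x)
    (fun i hi => (hw i hi).le) h1 (fun i hi => hx i hi)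
  simpa using this

theorem sum_fiber [DecidableEq β] {S : Finset Ω} {w : Ω → ℝ} (hw : ∀ s ∈ S, 0 < w s) (f : Ω → β)
    (q : β → ℝ) :
    ∑ t ∈ S, w t * (q (f t) / pm S w f (f t)) = ∑ y ∈ S.image f, q y := by
  rw [← Finset.sum_fiberwise_of_maps_to (g := f) (t := S.image f)
    (fun t ht => Finset.mem_image_of_mem f ht)]
  apply Finset.sum_congr rfl
  intro y hy
  obtain ⟨t, ht, rfl⟩ := Finset.mem_image.1 hy
  have hp := pm_pos hw f ht
  have : ∀ s ∈ S.filter (fun s => f s = f t), w s * (q (f s) / pm S w f (f s))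
      = w s * (q (f t) / pm S w f (f t)) := by
    intro s hs
    rw [(Finset.mem_filter.1 hs).2]
  rw [Finset.sum_congr rfl this, ← Finset.sum_mul]
  change pm S w f (f t) * _ = _
  field_simp

theorem pm_sum [DecidableEq β] [DecidableEq δ] {S : Finset Ω} {w : Ω → ℝ} (h : Ω → β) (ψ : β → δ)
    (c : δ) :
    ∑ z ∈ S.image h with ψ z = c, pm S w h z = pm S w (fun t => ψ (h t)) c := by
  unfold pm
  rw [← Finset.sum_fiberwise_of_maps_to (g := h) (s := S.filter fun s => ψ (h s) = c)
    (t := (S.image h).filter fun z => ψ z = c)]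
  · apply Finset.sum_congr rfl
    intro z hz
    apply Finset.sum_congr _ (fun _ _ => rfl)
    ext s
    simp only [Finset.mem_filter] at hz ⊢
    constructor
    · rintro ⟨a, rfl⟩
      exact ⟨⟨a, hz.2⟩, rfl⟩
    · rintro ⟨⟨a, _⟩, b⟩
      exact ⟨a, b⟩
  · intro t ht
    simp only [Finset.mem_filter] at ht ⊢
    exact ⟨Finset.mem_image_of_mem _ ht.1, ht.2⟩

theorem pm_sum_all [DecidableEq β] {S : Finset Ω} {w : Ω → ℝ} (h : Ω → β) :
    ∑ z ∈ S.image h, pm S w h z = ∑ s ∈ S, w s := by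
  unfold pm
  exact Finset.sum_fiberwise_of_maps_to (fun t ht => Finset.mem_image_of_mem _ ht) _

theorem Hf_congr [DecidableEq β] [DecidableEq δ] {S : Finset Ω} {w : Ω → ℝ} (f : Ω → β)
    (g : Ω → δ) (h : ∀ s ∈ S, ∀ t ∈ S, f s = f t ↔ g s = g t) : Hf S w f = Hf S w g := by
  unfold Hf
  congr 1
  apply Finset.sum_congr rfl
  intro t ht
  congr 2
  unfold pm
  apply Finset.sum_congr _ (fun _ _ => rfl)
  ext s
  simp only [Finset.mem_filter]
  constructor
  · rintro ⟨a, b⟩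
    exact ⟨a, (h s a t ht).1 b⟩
  · rintro ⟨a, b⟩
    exact ⟨a, (h s a t ht).2 b⟩

theorem Hf_submod [DecidableEq β] [DecidableEq δ] [DecidableEq ε] {S : Finset Ω} {w : Ω → ℝ}
    (hw : ∀ s ∈ S, 0 < w s) (h1 : ∑ s ∈ S, w s = 1) (f : Ω → β) (h : Ω → δ) (φ : β → ε)
    (ψ : δ → ε) (hφ : ∀ t, φ (f t) = ψ (h t)) :
    Hf S w (fun t => (f t, h t)) + Hf S w (fun t => φ (f t)) ≤ Hf S w f + Hf S w h := by
  set g : Ω → ε := fun t => φ (f t) with hg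
  set k : Ω → β × δ := fun t => (f t, h t) with hk
  have pf := fun t (ht : t ∈ S) => pm_pos hw f ht
  have ph := fun t (ht : t ∈ S) => pm_pos hw h ht
  have pg := fun t (ht : t ∈ S) => pm_pos hw g ht
  have pk := fun t (ht : t ∈ S) => pm_pos hw k ht
  have G := gibbs (x := fun t => (pm S w f (f t) * pm S w h (h t) / pm S w g (g t))
      / pm S w k (k t)) hw h1 (by
    intro t ht
    have := pf t ht; have := ph t ht; have := pg t ht; have := pk t ht
    positivity)
  have e1 := sum_fiber hw k (fun y => pm S w f y.1 * pm S w h y.2 / pm S w g (φ y.1))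
  have e2 : ∑ y ∈ S.image k, pm S w f y.1 * pm S w h y.2 / pm S w g (φ y.1) ≤ 1 := by
    have hnn : ∀ (y : β) , 0 ≤ pm S w f y := fun y =>
      Finset.sum_nonneg (fun i hi => (hw i (Finset.mem_filter.1 hi).1).le)
    have hnn2 : ∀ (y : δ) , 0 ≤ pm S w h y := fun y =>
      Finset.sum_nonneg (fun i hi => (hw i (Finset.mem_filter.1 hi).1).le)
    have hnn3 : ∀ (y : ε) , 0 ≤ pm S w g y := fun y =>
      Finset.sum_nonneg (fun i hi => (hw i (Finset.mem_filter.1 hi).1).le)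
    calc _ ≤ ∑ y ∈ (S.image f ×ˢ S.image h) with ψ y.2 = φ y.1,
          pm S w f y.1 * pm S w h y.2 / pm S w g (φ y.1) := by
            apply Finset.sum_le_sum_of_subset_of_nonneg
            · intro y hy
              obtain ⟨t, ht, rfl⟩ := Finset.mem_image.1 hy
              simp only [Finset.mem_filter, Finset.mem_product]
              exact ⟨⟨Finset.mem_image_of_mem _ ht, Finset.mem_image_of_mem _ ht⟩, (hφ t).symm⟩
            · intro y _ _
              exact div_nonneg (mul_nonneg (hnn _) (hnn2 _)) (hnn3 _)
      _ = ∑ y ∈ S.image f, ∑ z ∈ S.image h with ψ z = φ y,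
          pm S w f y * pm S w h z / pm S w g (φ y) := by
            rw [Finset.sum_filter, Finset.sum_product]
            apply Finset.sum_congr rfl
            intro y _
            rw [Finset.sum_filter]
      _ = ∑ y ∈ S.image f, pm S w f y := by
            apply Finset.sum_congr rfl
            intro y hy
            obtain ⟨t, ht, rfl⟩ := Finset.mem_image.1 hy
            rw [← Finset.sum_div, ← Finset.mul_sum, pm_sum]
            have : (fun t => ψ (h t)) = g := by
              funext t
              exact (hφ t).symm
            rw [this]
            have := (pg t ht).ne'
            change _ * pm S w g (g t) / pm S w g (g t) = _
            field_simp
      _ = 1 := by rw [pm_sum_all, h1]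
      _ ≤ 1 := le_rfl
  have e3 : ∑ s ∈ S, w s * Real.log ((pm S w f (f s) * pm S w h (h s) / pm S w g (g s))
      / pm S w k (k s)) = -Hf S w f - Hf S w h + Hf S w g + Hf S w k := by
    unfold Hf
    rw [neg_neg, sub_neg_eq_add, ← Finset.sum_add_distrib, ← sub_eq_add_neg,
      ← sub_eq_add_neg, ← Finset.sum_sub_distrib, ← Finset.sum_sub_distrib]
    apply Finset.sum_congr rfl
    intro t ht
    have a := (pf t ht).ne'; have b := (ph t ht).ne'
    have c := (pg t ht).ne'; have d := (pk t ht).ne'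
    rw [Real.log_div (by positivity) d, Real.log_div (by positivity) c, Real.log_mul a b]
    ring
  have e4 : Real.log (∑ s ∈ S, w s * ((pm S w f (f s) * pm S w h (h s) / pm S w g (g s))
      / pm S w k (k s))) ≤ 0 := by
    rw [show (∑ s ∈ S, w s * ((pm S w f (f s) * pm S w h (h s) / pm S w g (g s))
      / pm S w k (k s))) = _ from e1]
    apply Real.log_nonpos _ e2
    rw [← e1]
    apply Finset.sum_nonneg
    intro t ht
    have := pf t ht; have := ph t ht; have := pg t ht; have := pk t ht; have := hw t ht
    simp only [hk]
    positivity
  rw [e3] at G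
  linarith

end Ent

theorem proj_eq_iff {A α : Type*} [DecidableEq A] (W : Finset A) (s t : A → α) :
    proj W s = proj W t ↔ ∀ x ∈ W, s x = t x := by
  unfold proj
  rw [funext_iff]
  apply forall_congr'
  intro x
  by_cases hx : x ∈ W <;> simp [hx]

/-- Submodularity for indexed families. -/
theorem Hf_proj_submod {Ω ι α : Type*} [DecidableEq ι] [Fintype ι] [DecidableEq α] {S : Finset Ω}
    {w : Ω → ℝ} (hw : ∀ s ∈ S, 0 < w s) (h1 : ∑ s ∈ S, w s = 1) (X : Ω → ι → α)
    (U V I J : Finset ι) (hJ : U ∪ V = J) (hI : U ∩ V = I) :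
    Hf S w (fun t => proj J (X t)) + Hf S w (fun t => proj I (X t)) ≤
      Hf S w (fun t => proj U (X t)) + Hf S w (fun t => proj V (X t)) := by
  subst hI hJ
  have key := Hf_submod hw h1 (fun t => proj U (X t)) (fun t => proj V (X t))
    (fun u x => if x ∈ V then u x else none) (fun u x => if x ∈ U then u x else none) (by
      intro t
      funext x
      by_cases hU : x ∈ U <;> by_cases hV : x ∈ V <;> simp [proj, hU, hV])
  have a : Hf S w (fun t => (proj U (X t), proj V (X t))) =
      Hf S w (fun t => proj (U ∪ V) (X t)) := by
    apply Hf_congr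
    intro s _ t _
    simp only [Prod.mk.injEq, proj_eq_iff, Finset.mem_union]
    constructor
    · rintro ⟨a, b⟩ x (h | h)
      · exact a x h
      · exact b x h
    · intro h
      exact ⟨fun x hx => h x (Or.inl hx), fun x hx => h x (Or.inr hx)⟩
  have b : (fun t => (fun (u : ι → Option α) x => if x ∈ V then u x else none) (proj U (X t))) =
      fun t => proj (U ∩ V) (X t) := by
    funext t x
    by_cases hU : x ∈ U <;> by_cases hV : x ∈ V <;> simp [proj, hU, hV]
  rw [a, b] at key
  exact key

/-! ### The copy construction -/

section Copy

variable {Ω β δ : Type*} [DecidableEq β] [DecidableEq δ]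

/-- The pairs of points that agree on `g`. -/
def cS (S : Finset Ω) (g : Ω → β) : Finset (Ω × Ω) := (S ×ˢ S).filter fun p => g p.1 = g p.2

/-- The conditionally independent coupling over `g`. -/
def cw (S : Finset Ω) (w : Ω → ℝ) (g : Ω → β) (p : Ω × Ω) : ℝ :=
  w p.1 * w p.2 / pm S w g (g p.1)

theorem cw_pos {S : Finset Ω} {w : Ω → ℝ} (hw : ∀ s ∈ S, 0 < w s) (g : Ω → β) :
    ∀ p ∈ cS S g, 0 < cw S w g p := by
  intro p hp
  simp only [cS, Finset.mem_filter, Finset.mem_product] at hp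
  have := hw _ hp.1.1; have := hw _ hp.1.2; have := pm_pos hw g hp.1.1
  unfold cw
  positivity

theorem c_left {S : Finset Ω} {w : Ω → ℝ} (hw : ∀ s ∈ S, 0 < w s) (g : Ω → β) (G : Ω → ℝ) :
    ∑ p ∈ cS S g, cw S w g p * G p.1 = ∑ t ∈ S, w t * G t := by
  unfold cS cw
  rw [Finset.sum_filter, Finset.sum_product]
  apply Finset.sum_congr rfl
  intro t ht
  have hp := pm_pos hw g ht
  have : ∀ s ∈ S, (if g t = g s then w t * w s / pm S w g (g t) * G t else 0) =
      (if g s = g t then w s else 0) * (w t / pm S w g (g t) * G t) := by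
    intro s _
    by_cases h : g s = g t
    · simp only [h, if_true]; ring
    · simp [h, Ne.symm h]
  rw [Finset.sum_congr rfl this, ← Finset.sum_mul, ← Finset.sum_filter]
  change pm S w g (g t) * _ = _
  field_simp

theorem c_right {S : Finset Ω} {w : Ω → ℝ} (hw : ∀ s ∈ S, 0 < w s) (g : Ω → β) (G : Ω → ℝ) :
    ∑ p ∈ cS S g, cw S w g p * G p.2 = ∑ t ∈ S, w t * G t := by
  rw [← c_left hw g G]
  have mem : ∀ p ∈ cS S g, (p.2, p.1) ∈ cS S g := by
    intro p hp
    simp only [cS, Finset.mem_filter, Finset.mem_product] at hp ⊢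
    exact ⟨⟨hp.1.2, hp.1.1⟩, hp.2.symm⟩
  refine Finset.sum_bij' (fun p _ => (p.2, p.1)) (fun p _ => (p.2, p.1)) mem mem
    (fun _ _ => rfl) (fun _ _ => rfl) ?_
  intro p hp
  simp only [cS, Finset.mem_filter, Finset.mem_product] at hp
  simp only [cw, hp.2]
  ring

theorem cw_sum {S : Finset Ω} {w : Ω → ℝ} (hw : ∀ s ∈ S, 0 < w s) (h1 : ∑ s ∈ S, w s = 1)
    (g : Ω → β) : ∑ p ∈ cS S g, cw S w g p = 1 := by
  have := c_left hw g (fun _ => 1)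
  simpa [h1] using this

theorem c_H_left {S : Finset Ω} {w : Ω → ℝ} (hw : ∀ s ∈ S, 0 < w s) (g : Ω → β) (F : Ω → δ) :
    Hf (cS S g) (cw S w g) (fun p => F p.1) = Hf S w F := by
  have e : ∀ y, pm (cS S g) (cw S w g) (fun p => F p.1) y = pm S w F y := by
    intro y
    have := c_left hw g (fun t => if F t = y then 1 else 0)
    unfold pm
    rw [Finset.sum_filter, Finset.sum_filter]
    simpa using this
  unfold Hf
  simp only [e]
  rw [c_left hw g (fun t => Real.log (pm S w F (F t)))]

theorem c_H_right {S : Finset Ω} {w : Ω → ℝ} (hw : ∀ s ∈ S, 0 < w s) (g : Ω → β) (F : Ω → δ) :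
    Hf (cS S g) (cw S w g) (fun p => F p.2) = Hf S w F := by
  have e : ∀ y, pm (cS S g) (cw S w g) (fun p => F p.2) y = pm S w F y := by
    intro y
    have := c_right hw g (fun t => if F t = y then 1 else 0)
    unfold pm
    rw [Finset.sum_filter, Finset.sum_filter]
    simpa using this
  unfold Hf
  simp only [e]
  rw [c_right hw g (fun t => Real.log (pm S w F (F t)))]

theorem c_H_joint [DecidableEq Ω] {S : Finset Ω} {w : Ω → ℝ} (hw : ∀ s ∈ S, 0 < w s) (F : Ω → δ)
    (φ : δ → β) (g : Ω → β) (hg : ∀ t, g t = φ (F t)) :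
    Hf (cS S g) (cw S w g) (fun p => (p.1, F p.2)) = Hf S w id + Hf S w F - Hf S w g := by
  have e : ∀ p ∈ cS S g, pm (cS S g) (cw S w g) (fun p => (p.1, F p.2)) (p.1, F p.2) =
      w p.1 * pm S w F (F p.2) / pm S w g (g p.1) := by
    intro p hp
    simp only [cS, Finset.mem_filter, Finset.mem_product] at hp
    unfold pm cS cw
    rw [Finset.filter_filter, Finset.sum_filter, Finset.sum_product]
    rw [Finset.sum_eq_single p.1]
    · rw [Finset.mul_sum, Finset.sum_div, Finset.sum_filter]
      apply Finset.sum_congr rfl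
      intro s hs
      by_cases h : F s = F p.2
      · have : g p.1 = g s := by rw [hp.2, hg, hg, h]
        simp [h, this]
        rfl
      · simp [h]
    · intro t _ ht
      apply Finset.sum_eq_zero
      intro s _
      simp [ht]
    · intro h
      exact absurd hp.1.1 h
  have hid : ∀ t ∈ S, pm S w id t = w t := by
    intro t ht
    unfold pm
    rw [Finset.sum_filter]
    simp [ht]
  have a := c_left hw g (fun t => Real.log (pm S w id t))
  have b := c_right hw g (fun t => Real.log (pm S w F (F t)))
  have c := c_left hw g (fun t => Real.log (pm S w g (g t)))
  unfold Hf
  simp only [id]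
  rw [← a, ← b, ← c, ← neg_add, sub_neg_eq_add, ← Finset.sum_add_distrib, neg_add_eq_sub,
    ← Finset.sum_sub_distrib, ← Finset.sum_neg_distrib]
  apply Finset.sum_congr rfl
  intro p hp
  rw [e p hp]
  simp only [cS, Finset.mem_filter, Finset.mem_product] at hp
  have x := (hw _ hp.1.1).ne'; have y := (pm_pos hw F hp.1.2).ne'
  have z := (pm_pos hw g hp.1.1).ne'
  rw [Real.log_div (by positivity) z, Real.log_mul x y, hid _ hp.1.1]
  ring

end Copy

/-- The Zhang–Yeung inequality. -/
theorem zhang_yeung {α : Type*} [DecidableEq α] {R : Finset (Fin 4 → α)} {w : (Fin 4 → α) → ℝ}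
    (hw : ∀ s ∈ R, 0 < w s) (h1 : ∑ s ∈ R, w s = 1) (h : Finset (Fin 4) → ℝ)
    (hh : ∀ W, h W = Hf R w (proj W)) :
    4 * h {0, 1, 2} + h {0, 1, 3} + h {2, 3} + h {2} + 2 * h {0} + 2 * h {1} ≤
      3 * h {0, 2} + 3 * h {1, 2} + 3 * h {0, 1} + h {0, 3} + h {1, 3} := by
  let g : (Fin 4 → α) → Fin 4 → Option α := proj {0, 1}
  let X : (Fin 4 → α) × (Fin 4 → α) → Fin 5 → α :=
    fun p => ![p.1 0, p.1 1, p.1 2, p.1 3, p.2 2]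
  let H : Finset (Fin 5) → ℝ := fun W => Hf (cS R g) (cw R w g) (fun p => proj W (X p))
  have sub : ∀ U V I J : Finset (Fin 5), U ∪ V = J → U ∩ V = I → H J + H I ≤ H U + H V :=
    fun U V I J => Hf_proj_submod (cw_pos hw g) (cw_sum hw h1 g) X U V I J
  have left : ∀ (W : Finset (Fin 5)) (W' : Finset (Fin 4)),
      (∀ p q, proj W (X p) = proj W (X q) ↔ proj W' p.1 = proj W' q.1) → H W = h W' := by
    intro W W' hW
    rw [hh, ← c_H_left hw g]
    exact Hf_congr _ _ (fun s _ t _ => hW s t)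
  have right : ∀ (W : Finset (Fin 5)) (W' : Finset (Fin 4)),
      (∀ p ∈ cS R g, ∀ q ∈ cS R g,
        proj W (X p) = proj W (X q) ↔ proj W' p.2 = proj W' q.2) → H W = h W' := by
    intro W W' hW
    rw [hh, ← c_H_right hw g]
    exact Hf_congr _ _ hW
  have l0 : H {0} = h {0} := left _ _ (by intro p q; simp [proj_eq_iff, X])
  have l1 : H {1} = h {1} := left _ _ (by intro p q; simp [proj_eq_iff, X])
  have l02 : H {0, 2} = h {0, 2} := left _ _ (by intro p q; simp [proj_eq_iff, X])
  have l12 : H {1, 2} = h {1, 2} := left _ _ (by intro p q; simp [proj_eq_iff, X])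
  have l03 : H {0, 3} = h {0, 3} := left _ _ (by intro p q; simp [proj_eq_iff, X])
  have l13 : H {1, 3} = h {1, 3} := left _ _ (by intro p q; simp [proj_eq_iff, X])
  have l23 : H {2, 3} = h {2, 3} := left _ _ (by intro p q; simp [proj_eq_iff, X])
  have l012 : H {0, 1, 2} = h {0, 1, 2} := left _ _ (by intro p q; simp [proj_eq_iff, X])
  have l013 : H {0, 1, 3} = h {0, 1, 3} := left _ _ (by intro p q; simp [proj_eq_iff, X])
  have l0123 : H {0, 1, 2, 3} = h {0, 1, 2, 3} := left _ _ (by intro p q; simp [proj_eq_iff, X])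
  have r4 : H {4} = h {2} := right _ _ (by intro p _ q _; simp [proj_eq_iff, X])
  have key : ∀ p ∈ cS R g, p.1 0 = p.2 0 ∧ p.1 1 = p.2 1 := by
    intro p hp
    simpa [cS, g, proj_eq_iff] using (Finset.mem_filter.1 hp).2
  have r04 : H {0, 4} = h {0, 2} := right _ _ (by
    intro p hp q hq
    simp [proj_eq_iff, X, (key p hp).1, (key q hq).1])
  have r14 : H {1, 4} = h {1, 2} := right _ _ (by
    intro p hp q hq
    simp [proj_eq_iff, X, (key p hp).2, (key q hq).2])
  have joint : H {0, 1, 2, 3, 4} = h {0, 1, 2, 3} + h {0, 1, 2} - h {0, 1} := by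
    have c := c_H_joint hw (proj ({0, 1, 2} : Finset (Fin 4)))
      (fun u x => if x ∈ ({0, 1} : Finset (Fin 4)) then u x else none) g (by
        intro t
        funext x
        fin_cases x <;> simp [g, proj])
    have c1 : Hf R w id = h {0, 1, 2, 3} := by
      rw [hh]
      apply Hf_congr
      intro s _ t _
      rw [proj_eq_iff, id, id, funext_iff]
      simp [Fin.forall_fin_succ]
    rw [c1, ← hh, ← hh] at c
    rw [← c]
    apply Hf_congr
    intro p hp q hq
    have kp := key p hp
    have kq := key q hq
    rw [Prod.mk.injEq, proj_eq_iff, proj_eq_iff, funext_iff]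
    simp [X, Fin.forall_fin_succ, ← kp.1, ← kp.2, ← kq.1, ← kq.2]
    tauto
  have s1 := sub {2, 4} {3, 4} {4} {2, 3, 4} (by decide) (by decide)
  have s2 := sub {0, 2, 4} {1, 2, 4} {2, 4} {0, 1, 2, 4} (by decide) (by decide)
  have s3 := sub {0, 3, 4} {1, 3, 4} {3, 4} {0, 1, 3, 4} (by decide) (by decide)
  have s4 := sub {0, 2} {0, 4} {0} {0, 2, 4} (by decide) (by decide)
  have s5 := sub {1, 2} {1, 4} {1} {1, 2, 4} (by decide) (by decide)
  have s6 := sub {0, 3} {0, 4} {0} {0, 3, 4} (by decide) (by decide)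
  have s7 := sub {1, 3} {1, 4} {1} {1, 3, 4} (by decide) (by decide)
  have s8 := sub {0, 1, 2, 4} {0, 1, 2, 3} {0, 1, 2} {0, 1, 2, 3, 4} (by decide) (by decide)
  have s9 := sub {0, 1, 3, 4} {0, 1, 2, 3} {0, 1, 3} {0, 1, 2, 3, 4} (by decide) (by decide)
  have s10 := sub {2, 3, 4} {0, 1, 2, 3} {2, 3} {0, 1, 2, 3, 4} (by decide) (by decide)
  linarith

/-! ### Degree sequences and entropy -/

section Deg

variable {α : Type*} [DecidableEq α]

theorem deg_sum (U V : Finset (Fin 4)) (R : Finset (Fin 4 → α)) (q : (Fin 4 → Option α) → ℝ) :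
    ∑ y ∈ R.image (fun t => (proj U t, proj V t)), q y.1 =
      ∑ u ∈ projR U R, (deg U V R u : ℝ) * q u := by
  rw [← Finset.sum_fiberwise_of_maps_to (g := Prod.fst) (t := projR U R)]
  · apply Finset.sum_congr rfl
    intro u _
    have : ∀ y ∈ (R.image (fun t => (proj U t, proj V t))).filter (fun y => y.1 = u),
        q y.1 = q u := by
      intro y hy
      rw [(Finset.mem_filter.1 hy).2]
    rw [Finset.sum_congr rfl this, Finset.sum_const, nsmul_eq_mul]
    congr 2
    unfold deg projR
    symm
    apply Finset.card_bij (fun v _ => (u, v))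
    · intro v hv
      obtain ⟨t, ht, rfl⟩ := Finset.mem_image.1 hv
      obtain ⟨ht', rfl⟩ := Finset.mem_filter.1 ht
      exact Finset.mem_filter.2 ⟨Finset.mem_image_of_mem _ ht', rfl⟩
    · intro a _ b _ hab
      exact (Prod.mk.inj hab).2
    · intro y hy
      obtain ⟨hy', rfl⟩ := Finset.mem_filter.1 hy
      obtain ⟨t, ht, rfl⟩ := Finset.mem_image.1 hy'
      exact ⟨proj V t, Finset.mem_image_of_mem _ (Finset.mem_filter.2 ⟨ht, rfl⟩), rfl⟩
  · intro y hy
    obtain ⟨t, ht, rfl⟩ := Finset.mem_image.1 hy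
    exact Finset.mem_image_of_mem _ ht

theorem deg_pos (U V : Finset (Fin 4)) {R : Finset (Fin 4 → α)} {t : Fin 4 → α} (ht : t ∈ R) :
    0 < (deg U V R (proj U t) : ℝ) := by
  have : 0 < deg U V R (proj U t) :=
    Finset.card_pos.2 ⟨proj V t, Finset.mem_image_of_mem _ (Finset.mem_filter.2 ⟨ht, rfl⟩)⟩
  exact_mod_cast this

theorem Hf_pair (U V : Finset (Fin 4)) (R : Finset (Fin 4 → α)) (w : (Fin 4 → α) → ℝ) :
    Hf R w (fun t => (proj U t, proj V t)) = Hf R w (proj (U ∪ V)) := by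
  apply Hf_congr
  intro s _ t _
  simp only [Prod.mk.injEq, proj_eq_iff, Finset.mem_union]
  constructor
  · rintro ⟨a, b⟩ x (h | h)
    · exact a x h
    · exact b x h
  · intro h
    exact ⟨fun x hx => h x (Or.inl hx), fun x hx => h x (Or.inr hx)⟩

/-- The Gibbs inequality against a weight depending only on the `U`-part. -/
theorem gibbs_deg (U V : Finset (Fin 4)) {R : Finset (Fin 4 → α)} {w : (Fin 4 → α) → ℝ}
    (hw : ∀ s ∈ R, 0 < w s) (h1 : ∑ s ∈ R, w s = 1) (q : (Fin 4 → Option α) → ℝ)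
    (hq : ∀ t ∈ R, 0 < q (proj U t)) :
    ∑ t ∈ R, w t * Real.log (q (proj U t)) + Hf R w (proj (U ∪ V)) ≤
      Real.log (∑ u ∈ projR U R, (deg U V R u : ℝ) * q u) := by
  rw [← Hf_pair, ← deg_sum, ← sum_fiber hw (fun t => (proj U t, proj V t)) (fun y => q y.1)]
  have pk := fun t (ht : t ∈ R) => pm_pos hw (fun t => (proj U t, proj V t)) ht
  refine le_trans (le_of_eq ?_) (gibbs hw h1 ?_)
  · unfold Hf
    rw [← sub_eq_add_neg, ← Finset.sum_sub_distrib]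
    apply Finset.sum_congr rfl
    intro t ht
    rw [Real.log_div (hq t ht).ne' (pk t ht).ne']
    ring
  · intro t ht
    exact div_pos (hq t ht) (pk t ht)

theorem cond_le (U V : Finset (Fin 4)) {R : Finset (Fin 4 → α)} {w : (Fin 4 → α) → ℝ}
    (hw : ∀ s ∈ R, 0 < w s) (h1 : ∑ s ∈ R, w s = 1) :
    Hf R w (proj (U ∪ V)) - Hf R w (proj U) ≤
      ∑ t ∈ R, w t * Real.log (deg U V R (proj U t)) := by
  have G := gibbs_deg U V hw h1 (fun u => pm R w (proj U) u / deg U V R u)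
    (fun t ht => div_pos (pm_pos hw _ ht) (deg_pos U V ht))
  have e : ∑ u ∈ projR U R, (deg U V R u : ℝ) * (pm R w (proj U) u / deg U V R u) = 1 := by
    rw [← h1, ← pm_sum_all (S := R) (proj U)]
    apply Finset.sum_congr rfl
    intro u hu
    obtain ⟨t, ht, rfl⟩ := Finset.mem_image.1 hu
    have := (deg_pos U V ht).ne'
    field_simp
  rw [e, Real.log_one] at G
  have e2 : ∑ t ∈ R, w t * Real.log (pm R w (proj U) (proj U t) / deg U V R (proj U t)) =
      - Hf R w (proj U) - ∑ t ∈ R, w t * Real.log (deg U V R (proj U t)) := by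
    unfold Hf
    rw [neg_neg, ← Finset.sum_sub_distrib]
    apply Finset.sum_congr rfl
    intro t ht
    rw [Real.log_div (pm_pos hw _ ht).ne' (deg_pos U V ht).ne']
    ring
  rw [e2] at G
  linarith

/-- The `ℓ_∞` statistics bound the conditional entropy. -/
theorem stat_top (U V : Finset (Fin 4)) {R : Finset (Fin 4 → α)} {w : (Fin 4 → α) → ℝ}
    (hw : ∀ s ∈ R, 0 < w s) (h1 : ∑ s ∈ R, w s = 1) (B : ℝ)
    (hB : lpNorm U V R ⊤ ≤ 2 ^ B) :
    Hf R w (proj (U ∪ V)) - Hf R w (proj U) ≤ B * Real.log 2 := by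
  refine (cond_le U V hw h1).trans ?_
  calc _ ≤ ∑ t ∈ R, w t * (B * Real.log 2) := by
        apply Finset.sum_le_sum
        intro t ht
        apply mul_le_mul_of_nonneg_left _ (hw t ht).le
        rw [← Real.log_rpow two_pos]
        apply Real.log_le_log (deg_pos U V ht)
        refine le_trans ?_ hB
        unfold lpNorm
        rw [if_pos rfl]
        exact_mod_cast Finset.le_sup (f := fun u => deg U V R u)
          (Finset.mem_image_of_mem (proj U) ht)
    _ = _ := by rw [← Finset.sum_mul, h1, one_mul]

/-- The `ℓ_p` statistics bound the entropy expression. -/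
theorem stat_fin (U V : Finset (Fin 4)) {R : Finset (Fin 4 → α)} {w : (Fin 4 → α) → ℝ}
    (hw : ∀ s ∈ R, 0 < w s) (h1 : ∑ s ∈ R, w s = 1) (B : ℝ) (p : ℝ≥0∞) (hp : p ≠ ⊤)
    (hp1 : 1 ≤ p.toReal) (hB : lpNorm U V R p ≤ 2 ^ B) :
    Hf R w (proj U) + p.toReal * (Hf R w (proj (U ∪ V)) - Hf R w (proj U)) ≤
      p.toReal * (B * Real.log 2) := by
  set r := p.toReal with hr
  have c := cond_le U V hw h1
  have G := gibbs_deg U V hw h1 (fun u => (deg U V R u : ℝ) ^ (r - 1))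
    (fun t ht => Real.rpow_pos_of_pos (deg_pos U V ht) _)
  have e : ∑ u ∈ projR U R, (deg U V R u : ℝ) * (deg U V R u : ℝ) ^ (r - 1) =
      ∑ u ∈ projR U R, (deg U V R u : ℝ) ^ r := by
    apply Finset.sum_congr rfl
    intro u hu
    obtain ⟨t, ht, rfl⟩ := Finset.mem_image.1 hu
    have := deg_pos U V ht
    rw [Real.rpow_sub_one this.ne']
    field_simp
  have e2 : ∑ t ∈ R, w t * Real.log ((deg U V R (proj U t) : ℝ) ^ (r - 1)) =
      (r - 1) * ∑ t ∈ R, w t * Real.log (deg U V R (proj U t)) := by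
    rw [Finset.mul_sum]
    apply Finset.sum_congr rfl
    intro t ht
    rw [Real.log_rpow (deg_pos U V ht)]
    ring
  have hne : R.Nonempty := by
    by_contra hcon
    rw [Finset.not_nonempty_iff_eq_empty] at hcon
    simp [hcon] at h1
  have hpos : 0 < ∑ u ∈ projR U R, (deg U V R u : ℝ) ^ r := by
    apply Finset.sum_pos
    · intro u hu
      obtain ⟨t, ht, rfl⟩ := Finset.mem_image.1 hu
      exact Real.rpow_pos_of_pos (deg_pos U V ht) _
    · exact hne.image _
  have L : Real.log (∑ u ∈ projR U R, (deg U V R u : ℝ) ^ r) ≤ r * (B * Real.log 2) := by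
    unfold lpNorm at hB
    rw [if_neg hp, ← hr] at hB
    have := Real.log_le_log (Real.rpow_pos_of_pos hpos _) hB
    rw [Real.log_rpow hpos, Real.log_rpow two_pos] at this
    have hr0 : 0 < r := by linarith
    calc _ = r * (1 / r * Real.log (∑ u ∈ projR U R, (deg U V R u : ℝ) ^ r)) := by field_simp
      _ ≤ _ := mul_le_mul_of_nonneg_left this hr0.le
  rw [e, e2] at G
  have := mul_le_mul_of_nonneg_left c (sub_nonneg.2 hp1)
  linarith

theorem Hf_empty {R : Finset (Fin 4 → α)} {w : (Fin 4 → α) → ℝ} (h1 : ∑ s ∈ R, w s = 1) :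
    Hf R w (proj ∅) = 0 := by
  unfold Hf pm
  simp [proj_eq_iff, h1]

end Deg

/-! ### The witness -/

/-- The Vámos-type polymatroid violating the Zhang–Yeung inequality. -/
def zyN (W : Finset (Fin 4)) : ℕ :=
  if W.card = 0 then 0 else if W.card = 1 then 2 else
    if W.card = 2 then (if W = {2, 3} then 4 else 3) else 4

theorem zyN_mono : ∀ U V : Finset (Fin 4), U ⊆ V → zyN U ≤ zyN V := by decide +kernel

theorem zyN_sub : ∀ U V : Finset (Fin 4), zyN (U ∪ V) + zyN (U ∩ V) ≤ zyN U + zyN V := by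
  decide +kernel

/-- Conditioning sets. -/
def wU : Fin 10 → Finset (Fin 4) :=
  ![{0}, {1}, {2}, ∅, ∅, ∅, ∅, {0, 1, 2}, {0, 1, 3}, {2, 3}]

/-- Conditioned sets. -/
def wV : Fin 10 → Finset (Fin 4) :=
  ![{2}, {2}, {0}, {1, 2}, {0, 1}, {0, 3}, {1, 3}, {3}, {2}, {0, 1}]

/-- Norm indices. -/
def wp : Fin 10 → ℝ≥0∞ := ![⊤, ⊤, ⊤, 1, 1, 1, 1, 3, 3, 3]

/-- Log-statistics. -/
def wb : Fin 10 → ℝ := ![1, 1, 1, 3, 3, 3, 3, 4 / 3, 4 / 3, 4 / 3]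

/-- The polymatroid bound of the witness is at least `4 k`. -/
theorem witness_lower (k : ℕ) : ((4 * (k : ℝ) : ℝ) : EReal) ≤
    LogLBound (Gamma (Fin 4)) 10 wU wV wp (fun i => (k : ℝ) * wb i) := by
  have hk : (0 : ℝ) ≤ k := Nat.cast_nonneg k
  apply le_sSup
  refine ⟨fun W => (k : ℝ) * zyN W, ⟨?_, ?_, ?_⟩, ?_, ?_⟩
  · simp [zyN]
  · intro U V h
    exact mul_le_mul_of_nonneg_left (by exact_mod_cast zyN_mono U V h) hk
  · intro U V
    have : ((zyN (U ∪ V) : ℝ) + zyN (U ∩ V)) ≤ zyN U + zyN V := by exact_mod_cast zyN_sub U V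
    have := mul_le_mul_of_nonneg_left this hk
    simp only [ge_iff_le]
    linarith
  · have z0 : zyN {0} = 2 := by decide
    have z1 : zyN {1} = 2 := by decide
    have z2 : zyN {2} = 2 := by decide
    have ze : zyN ∅ = 0 := by decide
    have z012 : zyN {0, 1, 2} = 4 := by decide
    have z013 : zyN {0, 1, 3} = 4 := by decide
    have z23 : zyN {2, 3} = 4 := by decide
    have y0 : zyN ({0} ∪ {2}) = 3 := by decide
    have y1 : zyN ({1} ∪ {2}) = 3 := by decide
    have y2 : zyN ({2} ∪ {0}) = 3 := by decide
    have y3 : zyN (∅ ∪ {1, 2}) = 3 := by decide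
    have y4 : zyN (∅ ∪ {0, 1}) = 3 := by decide
    have y5 : zyN (∅ ∪ {0, 3}) = 3 := by decide
    have y6 : zyN (∅ ∪ {1, 3}) = 3 := by decide
    have y7 : zyN ({0, 1, 2} ∪ {3}) = 4 := by decide
    have y8 : zyN ({0, 1, 3} ∪ {2}) = 4 := by decide
    have y9 : zyN ({2, 3} ∪ {0, 1}) = 4 := by decide
    have hr : ((1 : ℝ≥0∞) / 3).toReal = 1 / 3 := by simp
    have hr2 : ((1 : ℝ≥0∞) / ⊤).toReal = 0 := by simp
    intro i
    fin_cases i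
    · change ((1 : ℝ≥0∞) / ⊤).toReal * ((k : ℝ) * zyN {0}) +
        ((k : ℝ) * zyN ({0} ∪ {2}) - (k : ℝ) * zyN {0}) ≤ k * 1
      rw [hr2, z0, y0]; push_cast; linarith
    · change ((1 : ℝ≥0∞) / ⊤).toReal * ((k : ℝ) * zyN {1}) +
        ((k : ℝ) * zyN ({1} ∪ {2}) - (k : ℝ) * zyN {1}) ≤ k * 1
      rw [hr2, z1, y1]; push_cast; linarith
    · change ((1 : ℝ≥0∞) / ⊤).toReal * ((k : ℝ) * zyN {2}) +
        ((k : ℝ) * zyN ({2} ∪ {0}) - (k : ℝ) * zyN {2}) ≤ k * 1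
      rw [hr2, z2, y2]; push_cast; linarith
    · change ((1 : ℝ≥0∞) / 1).toReal * ((k : ℝ) * zyN ∅) +
        ((k : ℝ) * zyN (∅ ∪ {1, 2}) - (k : ℝ) * zyN ∅) ≤ k * 3
      rw [ze, y3]; push_cast; linarith
    · change ((1 : ℝ≥0∞) / 1).toReal * ((k : ℝ) * zyN ∅) +
        ((k : ℝ) * zyN (∅ ∪ {0, 1}) - (k : ℝ) * zyN ∅) ≤ k * 3
      rw [ze, y4]; push_cast; linarith
    · change ((1 : ℝ≥0∞) / 1).toReal * ((k : ℝ) * zyN ∅) +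
        ((k : ℝ) * zyN (∅ ∪ {0, 3}) - (k : ℝ) * zyN ∅) ≤ k * 3
      rw [ze, y5]; push_cast; linarith
    · change ((1 : ℝ≥0∞) / 1).toReal * ((k : ℝ) * zyN ∅) +
        ((k : ℝ) * zyN (∅ ∪ {1, 3}) - (k : ℝ) * zyN ∅) ≤ k * 3
      rw [ze, y6]; push_cast; linarith
    · change ((1 : ℝ≥0∞) / 3).toReal * ((k : ℝ) * zyN {0, 1, 2}) +
        ((k : ℝ) * zyN ({0, 1, 2} ∪ {3}) - (k : ℝ) * zyN {0, 1, 2}) ≤ k * (4 / 3)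
      rw [hr, z012, y7]; push_cast; linarith
    · change ((1 : ℝ≥0∞) / 3).toReal * ((k : ℝ) * zyN {0, 1, 3}) +
        ((k : ℝ) * zyN ({0, 1, 3} ∪ {2}) - (k : ℝ) * zyN {0, 1, 3}) ≤ k * (4 / 3)
      rw [hr, z013, y8]; push_cast; linarith
    · change ((1 : ℝ≥0∞) / 3).toReal * ((k : ℝ) * zyN {2, 3}) +
        ((k : ℝ) * zyN ({2, 3} ∪ {0, 1}) - (k : ℝ) * zyN {2, 3}) ≤ k * (4 / 3)
      rw [hr, z23, y9]; push_cast; linarith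
  · have : zyN Finset.univ = 4 := by decide
    simp only [this]
    push_cast
    rw [mul_comm]

/-- Any relation satisfying the amplified statistics has size at most `2 ^ (35 k / 9)`. -/
theorem witness_upper (k : ℕ) {α : Type*} [DecidableEq α] (R : Finset (Fin 4 → α))
    (hR : ∀ i, lpNorm (wU i) (wV i) R (wp i) ≤ 2 ^ ((k : ℝ) * wb i)) :
    Real.logb 2 R.card ≤ 35 / 9 * k := by
  have hk : (0 : ℝ) ≤ k := Nat.cast_nonneg k
  rcases R.eq_empty_or_nonempty with rfl | hne
  · simp
  have hc : (0 : ℝ) < R.card := by exact_mod_cast hne.card_pos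
  let w : (Fin 4 → α) → ℝ := fun _ => 1 / (R.card : ℝ)
  have hw : ∀ s ∈ R, 0 < w s := fun s _ => by positivity
  have h1 : ∑ s ∈ R, w s = 1 := by
    simp only [w, Finset.sum_const, nsmul_eq_mul]
    field_simp
  let h : Finset (Fin 4) → ℝ := fun W => Hf R w (proj W)
  have ZY := zhang_yeung hw h1 h (fun _ => rfl)
  have full : h {0, 1, 2, 3} = Real.log R.card := by
    have e : ∀ t ∈ R, pm R w (proj {0, 1, 2, 3}) (proj {0, 1, 2, 3} t) = w t := by
      intro t ht
      unfold pm
      rw [Finset.sum_filter]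
      have : ∀ s ∈ R, (if proj {0, 1, 2, 3} s = proj {0, 1, 2, 3} t then w s else 0) =
          if s = t then w s else 0 := by
        intro s _
        have : proj ({0, 1, 2, 3} : Finset (Fin 4)) s = proj {0, 1, 2, 3} t ↔ s = t := by
          rw [proj_eq_iff, funext_iff]
          simp [Fin.forall_fin_succ]
        simp [this]
      rw [Finset.sum_congr rfl this]
      simp [ht]
    change -∑ t ∈ R, w t * Real.log (pm R w (proj {0, 1, 2, 3}) (proj {0, 1, 2, 3} t)) = _
    rw [Finset.sum_congr rfl (fun t ht => by rw [e t ht])]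
    simp only [w, Finset.sum_const, nsmul_eq_mul, one_div, Real.log_inv]
    field_simp
  have he : h ∅ = 0 := Hf_empty h1
  have t0 : h ({0} ∪ {2}) - h {0} ≤ (k * 1) * Real.log 2 := stat_top _ _ hw h1 _ (hR 0)
  have t1 : h ({1} ∪ {2}) - h {1} ≤ (k * 1) * Real.log 2 := stat_top _ _ hw h1 _ (hR 1)
  have t2 : h ({2} ∪ {0}) - h {2} ≤ (k * 1) * Real.log 2 := stat_top _ _ hw h1 _ (hR 2)
  have o : (1 : ℝ≥0∞).toReal = 1 := by simp
  have o3 : (3 : ℝ≥0∞).toReal = 3 := by simp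
  have t3 : h ∅ + (1 : ℝ≥0∞).toReal * (h (∅ ∪ {1, 2}) - h ∅) ≤
      (1 : ℝ≥0∞).toReal * ((k * 3) * Real.log 2) :=
    stat_fin _ _ hw h1 _ 1 (by simp) (by simp) (hR 3)
  have t4 : h ∅ + (1 : ℝ≥0∞).toReal * (h (∅ ∪ {0, 1}) - h ∅) ≤
      (1 : ℝ≥0∞).toReal * ((k * 3) * Real.log 2) :=
    stat_fin _ _ hw h1 _ 1 (by simp) (by simp) (hR 4)
  have t5 : h ∅ + (1 : ℝ≥0∞).toReal * (h (∅ ∪ {0, 3}) - h ∅) ≤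
      (1 : ℝ≥0∞).toReal * ((k * 3) * Real.log 2) :=
    stat_fin _ _ hw h1 _ 1 (by simp) (by simp) (hR 5)
  have t6 : h ∅ + (1 : ℝ≥0∞).toReal * (h (∅ ∪ {1, 3}) - h ∅) ≤
      (1 : ℝ≥0∞).toReal * ((k * 3) * Real.log 2) :=
    stat_fin _ _ hw h1 _ 1 (by simp) (by simp) (hR 6)
  have t7 : h {0, 1, 2} + (3 : ℝ≥0∞).toReal * (h ({0, 1, 2} ∪ {3}) - h {0, 1, 2}) ≤
      (3 : ℝ≥0∞).toReal * ((k * (4 / 3)) * Real.log 2) :=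
    stat_fin _ _ hw h1 _ 3 (by simp) (by simp) (hR 7)
  have t8 : h {0, 1, 3} + (3 : ℝ≥0∞).toReal * (h ({0, 1, 3} ∪ {2}) - h {0, 1, 3}) ≤
      (3 : ℝ≥0∞).toReal * ((k * (4 / 3)) * Real.log 2) :=
    stat_fin _ _ hw h1 _ 3 (by simp) (by simp) (hR 8)
  have t9 : h {2, 3} + (3 : ℝ≥0∞).toReal * (h ({2, 3} ∪ {0, 1}) - h {2, 3}) ≤
      (3 : ℝ≥0∞).toReal * ((k * (4 / 3)) * Real.log 2) :=
    stat_fin _ _ hw h1 _ 3 (by simp) (by simp) (hR 9)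
  rw [show ({0} ∪ {2} : Finset (Fin 4)) = {0, 2} by decide] at t0
  rw [show ({1} ∪ {2} : Finset (Fin 4)) = {1, 2} by decide] at t1
  rw [show ({2} ∪ {0} : Finset (Fin 4)) = {0, 2} by decide] at t2
  rw [o, Finset.empty_union, he] at t3 t4 t5 t6
  rw [o3, show ({0, 1, 2} ∪ {3} : Finset (Fin 4)) = {0, 1, 2, 3} by decide] at t7
  rw [o3, show ({0, 1, 3} ∪ {2} : Finset (Fin 4)) = {0, 1, 2, 3} by decide] at t8
  rw [o3, show ({2, 3} ∪ {0, 1} : Finset (Fin 4)) = {0, 1, 2, 3} by decide] at t9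
  rw [Real.logb, div_le_iff₀ (Real.log_pos one_lt_two), ← full]
  linarith

/-- **the polymatroid bound is not asymptotically tight.** There exist a full
conjunctive query over `n = 4` variables, guarded abstract statistics `Σ` and positive
log-statistics `b`, such that for every integer `k ≥ 1` and every database instance `D`
(over any domain) satisfying the `k`-amplified statistics
`‖deg_{D (j i)}(V i|U i)‖_{p i} ≤ 2^{k·b i}`, the output satisfies
`log₂ |Q(D)| ≤ (35/36) · Log-L-Bound_{Γ_n}(Σ, k·b)`. -/
theorem polymatroid_bound_not_tight :
    ∃ (m : ℕ) (Y : Fin m → Finset (Fin 4)) (s : ℕ)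
      (U V : Fin s → Finset (Fin 4)) (p : Fin s → ℝ≥0∞) (j : Fin s → Fin m) (b : Fin s → ℝ),
      (∀ x : Fin 4, ∃ k : Fin m, x ∈ Y k) ∧
      (∀ i, 0 < p i) ∧
      (∀ i, U i ∪ V i ⊆ Y (j i)) ∧
      (∀ i, 0 < b i) ∧
      ∀ (k : ℕ), 1 ≤ k →
        ∀ (γ : Type) [DecidableEq γ] (D : Fin m → Finset (Fin 4 → γ)) (Q : Finset (Fin 4 → γ)),
          (∀ i, lpNorm (U i) (V i) (D (j i)) (p i) ≤ 2 ^ ((k : ℝ) * b i)) →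
          (∀ t, t ∈ Q ↔ ∀ l : Fin m, ∃ t' ∈ D l, ∀ x ∈ Y l, t x = t' x) →
          ((Real.logb 2 Q.card : EReal)
            ≤ ((35 / 36 : ℝ) : EReal) *
                LogLBound (Gamma (Fin 4)) s U V p (fun i => (k : ℝ) * b i)) := by
  refine ⟨1, fun _ => Finset.univ, 10, wU, wV, wp, fun _ => 0, wb, ?_, ?_, ?_, ?_, ?_⟩
  · intro x
    exact ⟨0, Finset.mem_univ x⟩
  · intro i
    fin_cases i <;> simp [wp]
  · intro i
    exact Finset.subset_univ _
  · intro i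
    fin_cases i <;> norm_num [wb]
  · intro k _ γ _ D Q hD hQ
    have hQD : Q = D 0 := by
      ext t
      rw [hQ]
      constructor
      · intro h
        obtain ⟨t', ht', e⟩ := h 0
        have : t = t' := funext fun x => e x (Finset.mem_univ x)
        rwa [this]
      · intro h l
        rw [Subsingleton.elim l 0]
        exact ⟨t, h, fun _ _ => rfl⟩
    have up := witness_upper k (D 0) hD
    rw [← hQD] at up
    calc ((Real.logb 2 Q.card : ℝ) : EReal) ≤ ((35 / 36 * (4 * (k : ℝ)) : ℝ) : EReal) := by
          apply EReal.coe_le_coe_iff.2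
          linarith
      _ = ((35 / 36 : ℝ) : EReal) * ((4 * (k : ℝ) : ℝ) : EReal) := EReal.coe_mul _ _
      _ ≤ _ := mul_le_mul_of_nonneg_left (witness_lower k)
          (EReal.coe_nonneg.2 (by norm_num))

end

end JoinBounds
end
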